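/- For every worker w the set {f ∈ F : (w,f) ∈ S*} is nonempty, and the function μ_W that sends each worker w to the ≻_w-greatest firm in {f ∈ F : (w,f) ∈ S*} is a bijection from W to F and is a stable matching of the matching problem. -/

import Mathlib

/-- `(w,f)` blocks the matching `μ`: `f ≻_w μ(w)` and `w ≻_f μ⁻¹(f)`.
`prefW w f f'` means worker `w` strictly prefers firm `f` to firm `f'`;
`prefF f w w'` means firm `f` strictly prefers worker `w` to worker `w'`. -/
def Blocks {W F : Type*} (prefW : W → F → F → Prop) (prefF : F → W → W → Prop)
    (μ : W ≃ F) (w : W) (f : F) : Prop :=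
  prefW w f (μ w) ∧ prefF f w (μ.symm f)

/-- A matching is stable if no pair blocks it. -/
def IsStableMatching {W F : Type*} (prefW : W → F → F → Prop)
    (prefF : F → W → W → Prop) (μ : W ≃ F) : Prop :=
  ∀ w f, ¬ Blocks prefW prefF μ w f

/-- A pair `(w,f)` is unattractive in `S`. -/
def Unattractive {W F : Type*} (prefW : W → F → F → Prop) (prefF : F → W → W → Prop)
    (S : Set (W × F)) (w : W) (f : F) : Prop :=
  (∃ f', (w, f') ∈ S ∧ prefW w f' f ∧
      ∀ w', w' ≠ w → (w', f') ∈ S → prefF f' w w') ∨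
  (∃ w', (w', f) ∈ S ∧ prefF f w' w ∧
      ∀ f'', f'' ≠ f → (w', f'') ∈ S → prefW w' f f'')

/-- `delta S` is `S` with all pairs unattractive in `S` removed. -/
def delta {W F : Type*} (prefW : W → F → F → Prop) (prefF : F → W → W → Prop)
    (S : Set (W × F)) : Set (W × F) :=
  {p ∈ S | ¬ Unattractive prefW prefF S p.1 p.2}

/-- The normal form: the fixed point of `delta` reached by iterating from `W × F`.
Since `delta S ⊆ S` and `W × F` is finite, `Fintype.card (W × F)` iterations suffice. -/
def NormalForm (W F : Type*) [Fintype W] [Fintype F]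
    (prefW : W → F → F → Prop) (prefF : F → W → W → Prop) : Set (W × F) :=
  (delta prefW prefF)^[Fintype.card (W × F)] Set.univ

/-- `μ` is `S`-stable: `S`-admissible and no pair of `S` blocks it within `S`. -/
def SStable {W F : Type*} (prefW : W → F → F → Prop) (prefF : F → W → W → Prop)
    (S : Set (W × F)) (μ : W ≃ F) : Prop :=
  (∀ w, (w, μ w) ∈ S) ∧
  ∀ w f, (w, f) ∈ S → ¬ (prefW w f (μ w) ∧ prefF f w (μ.symm f))

/-- Arcs of the matching digraph `D(S)`: from `(w,f)` to `(w,f')` whenever `f' ≻_w f`,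
and from `(w,f)` to `(w',f)` whenever `w' ≻_f w`. -/
def Arc {W F : Type*} (prefW : W → F → F → Prop) (prefF : F → W → W → Prop)
    (S : Set (W × F)) (p q : W × F) : Prop :=
  p ∈ S ∧ q ∈ S ∧
    ((p.1 = q.1 ∧ prefW p.1 q.2 p.2) ∨ (p.2 = q.2 ∧ prefF p.2 q.1 p.1))

/-- `D(S)` contains a directed cycle: distinct vertices `c 0, …, c (n-1)` with `n ≥ 1`,
`c n = c 0`, and an arc from each vertex to the next. -/
def HasDirectedCycle {W F : Type*} (prefW : W → F → F → Prop)
    (prefF : F → W → W → Prop) (S : Set (W × F)) : Prop :=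
  ∃ (n : ℕ) (c : Fin (n + 1) → W × F), 0 < n ∧
    Function.Injective (fun i : Fin n => c i.castSucc) ∧
    c (Fin.last n) = c 0 ∧
    ∀ i : Fin n, Arc prefW prefF S (c i.castSucc) (c i.succ)

/-- The preference lists possess a cycle: there are `k ≥ 2`, distinct workers
`w_1, …, w_k` and distinct firms `f_1, …, f_k` (indexed by `ZMod k`) with
`f_{j+1} ≻_{w_j} f_j` and `w_j ≻_{f_j} w_{j-1}` for all `j`, indices modulo `k`. -/
def PrefCycle {W F : Type*} (prefW : W → F → F → Prop)
    (prefF : F → W → W → Prop) : Prop :=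
  ∃ k : ℕ, 2 ≤ k ∧ ∃ (ws : ZMod k → W) (fs : ZMod k → F),
    Function.Injective ws ∧ Function.Injective fs ∧
    ∀ j : ZMod k, prefW (ws j) (fs (j + 1)) (fs j) ∧ prefF (fs j) (ws j) (ws (j - 1))

/-!
If `w` is the favorite of `f` among the pairs left, then the worker `w` need never settle for a
firm worse than `f`, and the best offer of this kind is itself never removed. Hence every pair
deleted on the way to the normal form `S*` is still unattractive in `S*`: the pairs of `S*` are
exactly those not unattractive in `S*`. So if `w` prefers `f` to every partner left to it, then
`(w, f) ∉ S*` must be unattractive because of a worker whom `f` prefers to `w` and whose favorite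
is `f`. If `w` had no partner left, every firm would thus be the favorite of some worker other than
`w`, and as a worker has only one favorite there would be more workers than firms. If `(w, f)`
blocked `μ_W`, the worker whose favorite is `f` would be `μ_W⁻¹(f)`, preferred by `f` to `w`.
-/

section Iterate

variable {α : Type*} {g : Set α → Set α}

theorem isFixedPt_iterate_of_ncard_le (hg : ∀ s, g s ⊆ s) {s : Set α} (hs : s.Finite) {k : ℕ}
    (hk : s.ncard ≤ k) : Function.IsFixedPt g (g^[k] s) := by
  induction k generalizing s with
  | zero =>
    obtain rfl : s = ∅ := (Set.ncard_eq_zero hs).1 (Nat.le_zero.1 hk)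
    exact Set.subset_empty_iff.1 (hg ∅)
  | succ k ih =>
    by_cases hfix : g s = s
    · rwa [Function.iterate_fixed hfix]
    · have hlt : (g s).ncard < s.ncard := Set.ncard_lt_ncard ((hg s).ssubset_of_ne hfix) hs
      exact ih (hs.subset (hg s)) (Nat.le_of_lt_succ (hlt.trans_le hk))

end Iterate

section Favorite

variable {α : Type*} {r : α → α → Prop} {s : Set α} {a b : α}

/-- `a` is the element of `s` strictly preferred to all others, where `r x y` means that `x` is
strictly preferred to `y`. -/
def IsFavorite (r : α → α → Prop) (s : Set α) (a : α) : Prop :=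
  a ∈ s ∧ ∀ b ∈ s, b ≠ a → r a b

theorem IsFavorite.not_rel [Std.Asymm r] (ha : IsFavorite r s a) (hb : b ∈ s) : ¬ r b a := by
  intro hba
  have hne : b ≠ a := fun h => irrefl_of r a (h ▸ hba)
  exact asymm_of r hba (ha.2 b hb hne)

theorem IsFavorite.eq [Std.Asymm r] (ha : IsFavorite r s a) (hb : IsFavorite r s b) :
    a = b := by
  by_contra hne
  exact hb.not_rel ha.1 (ha.2 b hb.1 (Ne.symm hne))

theorem IsFavorite.mono {t : Set α} (ha : IsFavorite r s a) (hts : t ⊆ s) (hat : a ∈ t) :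
    IsFavorite r t a :=
  ⟨hat, fun b hb => ha.2 b (hts hb)⟩

theorem exists_not_rel_of_nonempty [Finite α] [IsStrictOrder α r] (hs : s.Nonempty) :
    ∃ a ∈ s, ∀ b ∈ s, ¬ r b a :=
  (Finite.wellFounded_of_trans_of_irrefl r).has_min s hs

theorem exists_isFavorite [Finite α] [IsStrictTotalOrder α r] (hs : s.Nonempty) :
    ∃ a, IsFavorite r s a := by
  obtain ⟨a, ha, hmax⟩ := exists_not_rel_of_nonempty (r := r) hs
  exact ⟨a, ha, fun b hb hne =>
    (trichotomous_of r a b).resolve_right (not_or_intro hne.symm (hmax b hb))⟩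

end Favorite

section BetterOffer

variable {W F : Type*} {prefW : W → F → F → Prop} {prefF : F → W → W → Prop}
  {S : Set (W × F)} {w : W} {f : F}

/-- Among the firms whose favorite partner in `S` is `w`, there is one that `w` prefers to `f`.
This is the first of the two alternatives in `Unattractive`; exchanging the two sides of the
market (and replacing `S` by `Prod.swap ⁻¹' S`) gives the second. -/
def HasBetterOffer (prefW : W → F → F → Prop) (prefF : F → W → W → Prop)
    (S : Set (W × F)) (w : W) (f : F) : Prop :=
  ∃ f', prefW w f' f ∧ IsFavorite (prefF f') {w' | (w', f') ∈ S} w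

theorem unattractive_iff_hasBetterOffer :
    Unattractive prefW prefF S w f ↔
      HasBetterOffer prefW prefF S w f ∨ HasBetterOffer prefF prefW (Prod.swap ⁻¹' S) f w := by
  simp only [Unattractive, HasBetterOffer, IsFavorite, Set.mem_ofPred_eq, Set.mem_preimage,
    Prod.swap_prod_mk]
  grind

theorem unattractive_preimage_swap :
    Unattractive prefF prefW (Prod.swap ⁻¹' S) f w ↔ Unattractive prefW prefF S w f :=
  or_comm

theorem delta_subset (S : Set (W × F)) : delta prefW prefF S ⊆ S :=
  Set.sep_subset S _

theorem delta_preimage_swap :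
    delta prefF prefW (Prod.swap ⁻¹' S) = Prod.swap ⁻¹' delta prefW prefF S :=
  Set.ext fun _ => and_congr_right' (not_congr unattractive_preimage_swap)

theorem HasBetterOffer.delta [Finite F] [∀ w, IsStrictOrder F (prefW w)]
    [∀ f, Std.Asymm (prefF f)] (h : HasBetterOffer prefW prefF S w f) :
    HasBetterOffer prefW prefF (delta prefW prefF S) w f := by
  obtain ⟨g, ⟨hgf, hg⟩, hbest⟩ := exists_not_rel_of_nonempty (r := prefW w) h
  have hattr : ¬ Unattractive prefW prefF S w g := by
    rw [unattractive_iff_hasBetterOffer]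
    rintro (⟨f', hf'g, hf'⟩ | ⟨w', hw'w, hw'⟩)
    · exact hbest f' ⟨trans_of (prefW w) hf'g hgf, hf'⟩ hf'g
    · exact hg.not_rel hw'.1 hw'w
  exact ⟨g, hgf, hg.mono (fun _ hw' => delta_subset S hw') ⟨hg.1, hattr⟩⟩

theorem Unattractive.delta [Finite W] [Finite F] [∀ w, IsStrictOrder F (prefW w)]
    [∀ f, IsStrictOrder W (prefF f)] (h : Unattractive prefW prefF S w f) :
    Unattractive prefW prefF (delta prefW prefF S) w f := by
  rw [unattractive_iff_hasBetterOffer] at h ⊢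
  rw [← delta_preimage_swap]
  exact h.imp HasBetterOffer.delta HasBetterOffer.delta

theorem unattractive_of_notMem_delta [Finite W] [Finite F] [∀ w, IsStrictOrder F (prefW w)]
    [∀ f, IsStrictOrder W (prefF f)]
    (hS : ∀ w f, (w, f) ∉ S → Unattractive prefW prefF S w f) (w : W) (f : F)
    (h : (w, f) ∉ delta prefW prefF S) :
    Unattractive prefW prefF (delta prefW prefF S) w f := by
  suffices hu : Unattractive prefW prefF S w f from hu.delta
  by_contra hu
  exact h ⟨not_imp_comm.1 (hS w f) hu, hu⟩

end BetterOffer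

section Normal

variable {W F : Type*} {prefW : W → F → F → Prop} {prefF : F → W → W → Prop}
  {S : Set (W × F)} {w w' : W} {f : F}

/-- `S` consists of exactly the pairs that are not unattractive in `S`. This is the property of
the normal form on which the proof rests: besides being fixed by `delta`, a normal set still
witnesses the unattractiveness of every pair outside it. -/
def IsNormal (prefW : W → F → F → Prop) (prefF : F → W → W → Prop) (S : Set (W × F)) : Prop :=
  ∀ w f, (w, f) ∈ S ↔ ¬ Unattractive prefW prefF S w f

theorem isNormal_normalForm [Fintype W] [Fintype F] [∀ w, IsStrictOrder F (prefW w)]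
    [∀ f, IsStrictOrder W (prefF f)] :
    IsNormal prefW prefF (NormalForm W F prefW prefF) := by
  have hfix : delta prefW prefF (NormalForm W F prefW prefF) = NormalForm W F prefW prefF :=
    isFixedPt_iterate_of_ncard_le delta_subset Set.finite_univ
      (by rw [Set.ncard_univ, Nat.card_eq_fintype_card])
  have hout : ∀ w f, (w, f) ∉ NormalForm W F prefW prefF →
      Unattractive prefW prefF (NormalForm W F prefW prefF) w f :=
    Function.Iterate.rec
      (fun S => ∀ w f, (w, f) ∉ S → Unattractive prefW prefF S w f)
      (fun _ _ h => absurd (Set.mem_univ _) h) (fun _ => unattractive_of_notMem_delta) _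
  exact fun w f => ⟨fun h => (hfix.symm ▸ h : (w, f) ∈ delta prefW prefF _).2,
    not_imp_comm.1 (hout w f)⟩

namespace IsNormal

theorem not_prefF_of_isFavorite (hS : IsNormal prefW prefF S)
    (hw : IsFavorite (prefW w) {f | (w, f) ∈ S} f) (hw' : (w', f) ∈ S) : ¬ prefF f w w' :=
  fun h => (hS w' f).1 hw' (unattractive_iff_hasBetterOffer.2 (Or.inr ⟨w, h, hw⟩))

theorem eq_of_isFavorite [∀ f, Std.Trichotomous (prefF f)] (hS : IsNormal prefW prefF S)
    (hw : IsFavorite (prefW w) {f | (w, f) ∈ S} f)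
    (hw' : IsFavorite (prefW w') {f | (w', f) ∈ S} f) : w = w' :=
  Std.Trichotomous.trichotomous w w' (hS.not_prefF_of_isFavorite hw hw'.1)
    (hS.not_prefF_of_isFavorite hw' hw.1)

theorem exists_prefF_isFavorite_of_notMem (hS : IsNormal prefW prefF S) (hwf : (w, f) ∉ S)
    (hbest : ∀ f', (w, f') ∈ S → ¬ prefW w f' f) :
    ∃ w', prefF f w' w ∧ IsFavorite (prefW w') {f' | (w', f') ∈ S} f := by
  have hu : Unattractive prefW prefF S w f := not_not.1 (mt (hS w f).2 hwf)
  rcases unattractive_iff_hasBetterOffer.1 hu with ⟨f', hf'f, hf'⟩ | hw'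
  · exact absurd hf'f (hbest f' hf'.1)
  · exact hw'

theorem exists_mem [Finite W] [∀ w, Std.Asymm (prefW w)] (hcard : Nat.card W ≤ Nat.card F)
    (hS : IsNormal prefW prefF S) (w : W) : ∃ f, (w, f) ∈ S := by
  by_contra! hw
  choose admirer _ hadmirer using fun f =>
    hS.exists_prefF_isFavorite_of_notMem (hw f) fun f' hf' => absurd hf' (hw f')
  have hinj : Function.Injective admirer := fun f f' h =>
    (hadmirer f).eq (h ▸ hadmirer f')
  obtain ⟨f, rfl⟩ := (hinj.bijective_of_nat_card_le hcard).surjective w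
  exact hw f (hadmirer f).1

theorem exists_equiv_isFavorite [Finite W] [Finite F] [∀ w, IsStrictTotalOrder F (prefW w)]
    [∀ f, Std.Trichotomous (prefF f)] (hcard : Nat.card W = Nat.card F)
    (hS : IsNormal prefW prefF S) :
    ∃ μ : W ≃ F, ∀ w, IsFavorite (prefW w) {f | (w, f) ∈ S} (μ w) := by
  choose m hm using fun w => exists_isFavorite (r := prefW w) (hS.exists_mem hcard.le w)
  have hinj : Function.Injective m := fun w w' h => hS.eq_of_isFavorite (hm w) (h ▸ hm w')
  exact ⟨Equiv.ofBijective m (hinj.bijective_of_nat_card_le hcard.ge), hm⟩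

theorem isStableMatching [∀ w, IsStrictOrder F (prefW w)] [∀ f, Std.Asymm (prefF f)]
    (hS : IsNormal prefW prefF S) {μ : W ≃ F}
    (hμ : ∀ w, IsFavorite (prefW w) {f | (w, f) ∈ S} (μ w)) :
    IsStableMatching prefW prefF μ := by
  rintro w f ⟨hwf, hfw⟩
  have hbest : ∀ f', (w, f') ∈ S → ¬ prefW w f' f := fun f' hf' h =>
    (hμ w).not_rel hf' (trans_of (prefW w) h hwf)
  have hnotMem : (w, f) ∉ S := fun h => (hμ w).not_rel h hwf
  obtain ⟨w', hw'w, hw'⟩ := hS.exists_prefF_isFavorite_of_notMem hnotMem hbest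
  have hpartner : μ.symm f = w' := μ.symm_apply_eq.2 (hw'.eq (hμ w'))
  exact asymm_of (prefF f) hw'w (hpartner ▸ hfw)

end IsNormal

end Normal

/-- For every worker `w` the set `{f | (w,f) ∈ S*}` is nonempty, and the map sending
each worker to their `≻_w`-greatest firm in that set is a bijection and a stable matching. -/
theorem worker_optimal_stable {W F : Type*} [Fintype W] [Fintype F] [Nonempty W]
    (hcard : Fintype.card W = Fintype.card F)
    (prefW : W → F → F → Prop) (prefF : F → W → W → Prop)
    (hW : ∀ w, IsStrictTotalOrder F (prefW w))
    (hF : ∀ f, IsStrictTotalOrder W (prefF f)) :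
    (∀ w : W, ∃ f : F, (w, f) ∈ NormalForm W F prefW prefF) ∧
    ∃ μ : W ≃ F, IsStableMatching prefW prefF μ ∧
      ∀ w : W, (w, μ w) ∈ NormalForm W F prefW prefF ∧
        ∀ f, (w, f) ∈ NormalForm W F prefW prefF → f ≠ μ w → prefW w (μ w) f := by
  have := hW
  have := hF
  have hcard : Nat.card W = Nat.card F := by simpa only [Nat.card_eq_fintype_card] using hcard
  have hS : IsNormal prefW prefF (NormalForm W F prefW prefF) := isNormal_normalForm
  obtain ⟨μ, hμ⟩ := hS.exists_equiv_isFavorite hcard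
  exact ⟨hS.exists_mem hcard.le, μ, hS.isStableMatching hμ, hμ⟩
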